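/- arXiv:2105.06924 — 4 statements merged into one kernel-verified Lean document; each statement's English description precedes it below -/
import Mathlib

section
/- For every vector v ∈ ℝⁿ, the Toeplitz-plus-Hankel matrix th(v) is diagonalized by the DCT matrix: C_n · th(v) · C_nᵀ = Diag(M v), the diagonal matrix whose p-th diagonal entry is the p-th component of M v, where M = W⁻¹ C_n (I + Z) is the n×n transform matrix. -/
open Matrix BigOperators Kronecker

noncomputable section

/-- The `n × n` discrete cosine transform (DCT) matrix, with 0-based indexing of the 1-based
formula `(C_n)_{ij} = √((2−δ_{i1})/n)·cos((i−1)(2j−1)π/(2n))`. -/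
def dctMatrix (n : ℕ) : Matrix (Fin n) (Fin n) ℝ :=
  Matrix.of fun i j =>
    Real.sqrt ((2 - if (i : ℕ) = 0 then 1 else 0) / n) *
      Real.cos ((i : ℝ) * (2 * (j : ℝ) + 1) * Real.pi / (2 * n))

/-- The `n × n` upshift matrix `Z`, with ones on the first superdiagonal. -/
def upshift (n : ℕ) : Matrix (Fin n) (Fin n) ℝ :=
  Matrix.of fun i j => if (i : ℕ) + 1 = (j : ℕ) then 1 else 0

/-- `W = diag(C_n(:,1))`, the diagonal matrix whose diagonal is the first column of the DCT
matrix. -/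
def Wdiag (n : ℕ) : Matrix (Fin n) (Fin n) ℝ :=
  Matrix.diagonal fun i => dctMatrix n i ⟨0, i.pos⟩

/-- The `n × n` transform matrix `M = W⁻¹ C_n (I + Z)`. -/
def transformM (n : ℕ) : Matrix (Fin n) (Fin n) ℝ :=
  (Wdiag n)⁻¹ * dctMatrix n * (1 + upshift n)

/-- The Hankel part `H_{p,q}` of the `(p,q)` block of `mat(A)` (0-based indices:
the 1-based conditions `p+q ≤ n3`, `p+q = n3+1`, `p+q ≥ n3+2` become
`p+q+1 < n3`, `p+q+1 = n3` and `p+q+1 > n3`, with blocks `A^{(p+q+1)}` resp. `0`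
resp. `A^{(2·n3−(p+q)−1)}` in 0-based numbering of the slices). -/
def hankelPart {n1 n2 n3 : ℕ} (A : Fin n3 → Matrix (Fin n1) (Fin n2) ℝ) (p q : Fin n3) :
    Matrix (Fin n1) (Fin n2) ℝ :=
  if h : p.val + q.val + 1 < n3 then A ⟨p.val + q.val + 1, h⟩
  else if h' : p.val + q.val + 1 = n3 then 0
  else A ⟨2 * n3 - (p.val + q.val) - 1, by
    have hp := p.isLt; have hq := q.isLt; omega⟩

/-- `mat(A)`: the block Toeplitz-plus-Hankel matrix associated with a third-order tensor `A`,
identified with the tuple of its frontal slices.  Rows are indexed by `Fin n3 × Fin n1`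
(block row, row within block) and columns by `Fin n3 × Fin n2`. -/
def tmat {n1 n2 n3 : ℕ} (A : Fin n3 → Matrix (Fin n1) (Fin n2) ℝ) :
    Matrix (Fin n3 × Fin n1) (Fin n3 × Fin n2) ℝ :=
  Matrix.of fun pi qj =>
    (A ⟨Nat.dist pi.1.val qj.1.val, by
        have hp := pi.1.isLt; have hq := qj.1.isLt
        simp only [Nat.dist]; omega⟩ + hankelPart A pi.1 qj.1) pi.2 qj.2

/-- The `p`-th transformed slice `Ã^{(p)} = Σ_q M_{pq} A^{(q)}` of a tensor `A`. -/
def tSlice {n1 n2 n3 : ℕ} (A : Fin n3 → Matrix (Fin n1) (Fin n2) ℝ) (p : Fin n3) :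
    Matrix (Fin n1) (Fin n2) ℝ :=
  ∑ q, transformM n3 p q • A q

/-- Toeplitz-plus-Hankel matrix `th(v)` of a vector `v ∈ ℝⁿ` (0-based indexing of the 1-based
formula of the paper). -/
def thMat {n : ℕ} (v : Fin n → ℝ) : Matrix (Fin n) (Fin n) ℝ :=
  Matrix.of fun p q =>
    v ⟨Nat.dist p.val q.val, by
        have hp := p.isLt; have hq := q.isLt; simp only [Nat.dist]; omega⟩ +
    (if h : p.val + q.val + 1 < n then v ⟨p.val + q.val + 1, h⟩
     else if h' : p.val + q.val + 1 = n then 0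
     else v ⟨2 * n - (p.val + q.val) - 1, by
       have hp := p.isLt; have hq := q.isLt; omega⟩)

/-- The product `a ⊛ B` of a tube `a ∈ ℝ^{1×1×n3}` (identified with a vector of `ℝ^{n3}`) with a
tensor `B`: the tensor whose transformed slices are `(a ⊛ B)~^{(p)} = (M a)_p • B̃^{(p)}`. -/
def tubeSMul {n1 n2 n3 : ℕ} (a : Fin n3 → ℝ) (B : Fin n3 → Matrix (Fin n1) (Fin n2) ℝ) :
    Fin n3 → Matrix (Fin n1) (Fin n2) ℝ :=
  fun t => ∑ p, (transformM n3)⁻¹ t p • ((transformM n3).mulVec a p • tSlice B p)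

/-- The c-product `a ⋆_c b` of two tubes: the tube whose transform is the componentwise product
of the transforms, `M (a ⋆_c b) = (M a) .* (M b)`. -/
def tubeCMul {n3 : ℕ} (a b : Fin n3 → ℝ) : Fin n3 → ℝ :=
  (transformM n3)⁻¹.mulVec fun p => (transformM n3).mulVec a p * (transformM n3).mulVec b p

/-- Frobenius norm of a real matrix. -/
def frobNorm {m n : ℕ} (B : Matrix (Fin m) (Fin n) ℝ) : ℝ :=
  Real.sqrt (∑ i, ∑ j, (B i j) ^ 2)

/-- Frobenius norm of a third-order tensor. -/
def tFrobNorm {n1 n2 n3 : ℕ} (A : Fin n3 → Matrix (Fin n1) (Fin n2) ℝ) : ℝ :=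
  Real.sqrt (∑ k, ∑ i, ∑ j, (A k i j) ^ 2)

/-- The `i`-th lateral slice `U(:,i,:)` of a tensor `U`: the `n1 × 1 × n3` tensor whose `k`-th
frontal slice is the `i`-th column of `U^{(k)}`. -/
def lateralSlice {n1 n2 n3 : ℕ} (U : Fin n3 → Matrix (Fin n1) (Fin n2) ℝ) (i : Fin n2) :
    Fin n3 → Matrix (Fin n1) (Fin 1) ℝ :=
  fun k => Matrix.of fun r _ => U k r i

/-- The `(i,j)` tube `S(i,j,:)` of a tensor `S`: the `1 × 1 × n3` tensor whose `k`-th frontal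
slice is the `(i,j)` entry of `S^{(k)}`. -/
def entryTube {n1 n2 n3 : ℕ} (S : Fin n3 → Matrix (Fin n1) (Fin n2) ℝ) (i : Fin n1) (j : Fin n2) :
    Fin n3 → Matrix (Fin 1) (Fin 1) ℝ :=
  fun k => Matrix.of fun _ _ => S k i j

/-- Slicewise transpose of a tensor. -/
def sTranspose {n1 n2 n3 : ℕ} (A : Fin n3 → Matrix (Fin n1) (Fin n2) ℝ) :
    Fin n3 → Matrix (Fin n2) (Fin n1) ℝ :=
  fun k => (A k)ᵀ

/-- `TVect(A)`: stacking the lateral slices of `A` one below the other; the `k`-th frontal slice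
of `TVect(A)` is obtained by stacking the columns of `A^{(k)}` (entry `r = j·n1 + i` is
`A^{(k)}_{i,j}`). -/
def tvect {n1 n2 n3 : ℕ} (A : Fin n3 → Matrix (Fin n1) (Fin n2) ℝ) :
    Fin n3 → Matrix (Fin (n1 * n2)) (Fin 1) ℝ :=
  fun k => Matrix.of fun r _ =>
    A k ⟨r.val % n1, Nat.mod_lt _ (Nat.pos_of_ne_zero fun h0 => absurd r.isLt (by simp [h0]))⟩
        ⟨r.val / n1, Nat.div_lt_of_lt_mul r.isLt⟩

/-!
Extend the `k`-th row of `C_n` to the sequence `m ↦ cos ((2m + 1) kπ / (2n))` on `ℤ`, which is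
symmetric about `-1/2` and about `n - 1/2`. The two Hankel corners of `th(v)` are exactly what
these reflections produce from a Toeplitz matrix: on such a sequence `f`, the matrix `th(e_j)` with
`j ≠ 0` acts as `f ↦ f(· + j) + f(· - j)`, without boundary terms. By the addition formula cosine
sequences are eigenvectors of this operator, so `C_n th(v) = D C_n` for some diagonal `D`. As
`th(v)` has first column `(I + Z) v`, comparing first columns identifies `D`, and orthogonality of
`C_n` finishes the proof.
-/

/-- A sequence symmetric about `-1/2` and about `n - 1/2`: the boundary conditions under which a
vector indexed by `0, …, n - 1` extends to `ℤ` for the DCT. -/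
structure HalfSampleSymmetric {α : Type*} (n : ℕ) (f : ℤ → α) : Prop where
  left : ∀ m, f (-1 - m) = f m
  right : ∀ m, f (2 * n - 1 - m) = f m

/-- The reflection of an index about `-1/2` or `n - 1/2` into `[0, n)`. A single reflection is
performed, so the result lies in `[0, n)` only for indices in `[-n, 2n)`. -/
def foldIndex (n : ℕ) (m : ℤ) : ℤ :=
  if m < 0 then -1 - m else if m < n then m else 2 * n - 1 - m

theorem foldIndex_mem_Ico {n : ℕ} {m : ℤ} (hm : m ∈ Set.Ico (-n : ℤ) (2 * n)) :
    foldIndex n m ∈ Set.Ico (0 : ℤ) n := by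
  rw [Set.mem_Ico] at hm ⊢
  unfold foldIndex
  split_ifs <;> omega

theorem HalfSampleSymmetric.apply_foldIndex {α : Type*} {n : ℕ} {f : ℤ → α}
    (hf : HalfSampleSymmetric n f) (m : ℤ) : f (foldIndex n m) = f m := by
  unfold foldIndex
  split_ifs
  exacts [hf.left m, rfl, hf.right m]

theorem sum_mul_ite_eq_intCast {R : Type*} [NonAssocSemiring R] {n : ℕ} (f : ℤ → R) {m : ℤ}
    (hm : m ∈ Set.Ico (0 : ℤ) n) :
    ∑ p : Fin n, f p * (if (p : ℤ) = m then 1 else 0) = f m := by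
  obtain ⟨hm0, hmn⟩ := hm
  lift m to ℕ using hm0
  have hm : m < n := by exact_mod_cast hmn
  rw [Finset.sum_eq_single ⟨m, hm⟩] <;> simp +contextual [Fin.ext_iff]

section ToeplitzPlusHankel

variable {n : ℕ}

theorem thMat_eq_sum_single (v : Fin n → ℝ) :
    thMat v = ∑ j, v j • thMat (Pi.single j 1) := by
  ext p q
  simp only [thMat, Matrix.sum_apply, Matrix.smul_apply, Matrix.of_apply, smul_eq_mul]
  split_ifs <;> simp [mul_add, Finset.sum_add_distrib, Pi.single_apply]

theorem thMat_single_eq_one {j : Fin n} (hj : (j : ℕ) = 0) : thMat (Pi.single j 1) = 1 := by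
  ext p q
  simp only [thMat, Matrix.of_apply, Pi.single_apply, Matrix.one_apply, Fin.ext_iff, Nat.dist]
  grind

theorem thMat_single_apply {j : Fin n} (hj : (j : ℕ) ≠ 0) (p q : Fin n) :
    thMat (Pi.single j 1) p q =
      (if (p : ℤ) = foldIndex n (q + j) then 1 else 0) +
        (if (p : ℤ) = foldIndex n (q - j) then 1 else 0) := by
  have hadd : (p : ℤ) = foldIndex n (q + j) ↔
      (p : ℕ) = q + j ∨ (p : ℕ) + q + 1 + j = 2 * n := by
    unfold foldIndex
    split_ifs <;> omega
  have hsub : (p : ℤ) = foldIndex n (q - j) ↔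
      (p : ℕ) + j = q ∨ (p : ℕ) + q + 1 = j := by
    unfold foldIndex
    split_ifs <;> omega
  simp only [thMat, Matrix.of_apply, Pi.single_apply, Fin.ext_iff, Nat.dist, hadd, hsub]
  grind

theorem HalfSampleSymmetric.vecMul_thMat_single {f : ℤ → ℝ} (hf : HalfSampleSymmetric n f)
    {j : Fin n} (hj : (j : ℕ) ≠ 0) :
    (fun p : Fin n ↦ f p) ᵥ* thMat (Pi.single j 1) =
      fun q : Fin n ↦ f (q + j) + f (q - j) := by
  ext q
  have hadd : (q + j : ℤ) ∈ Set.Ico (-n : ℤ) (2 * n) := by rw [Set.mem_Ico]; omega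
  have hsub : (q - j : ℤ) ∈ Set.Ico (-n : ℤ) (2 * n) := by rw [Set.mem_Ico]; omega
  simp only [Matrix.vecMul, dotProduct, thMat_single_apply hj, mul_add, Finset.sum_add_distrib]
  rw [sum_mul_ite_eq_intCast f (foldIndex_mem_Ico hadd),
    sum_mul_ite_eq_intCast f (foldIndex_mem_Ico hsub), hf.apply_foldIndex, hf.apply_foldIndex]

theorem thMat_col_zero (hn : 0 < n) (v : Fin n → ℝ) :
    (thMat v).col ⟨0, hn⟩ = (1 + upshift n) *ᵥ v := by
  ext p
  have hshift : (upshift n *ᵥ v) p = if h : (p : ℕ) + 1 < n then v ⟨p + 1, h⟩ else 0 := by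
    simp only [upshift, Matrix.mulVec, dotProduct, Matrix.of_apply, ite_mul, one_mul, zero_mul]
    split_ifs with h
    · rw [Finset.sum_eq_single ⟨p + 1, h⟩] <;> simp +contextual [Fin.ext_iff, eq_comm]
    · exact Finset.sum_eq_zero fun q _ ↦ if_neg (by omega)
  rw [Matrix.add_mulVec, Matrix.one_mulVec, Pi.add_apply, hshift]
  simp only [Matrix.col_apply, thMat, Matrix.of_apply, Nat.dist]
  grind

end ToeplitzPlusHankel

/-- The sequence of samples of a cosine at the odd multiples of the angle `θ`; up to scaling, the
rows of the DCT matrix are its restrictions to `0, …, n - 1`. -/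
def cosSeq (θ : ℝ) (m : ℤ) : ℝ :=
  Real.cos ((2 * m + 1) * θ)

section CosSeq

variable (θ φ : ℝ)

theorem halfSampleSymmetric_cosSeq {n : ℕ} {z : ℤ} (h : 2 * n * θ = z * Real.pi) :
    HalfSampleSymmetric n (cosSeq θ) where
  left m := by
    rw [cosSeq, cosSeq, ← Real.cos_neg]
    push_cast
    ring_nf
  right m := by
    have harg : (2 * ((2 * n - 1 - m : ℤ) : ℝ) + 1) * θ =
        z * (2 * Real.pi) - (2 * m + 1) * θ := by
      push_cast
      linear_combination 2 * h
    rw [cosSeq, cosSeq, harg, Real.cos_int_mul_two_pi_sub]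

theorem cosSeq_add_add_cosSeq_sub (m j : ℤ) :
    cosSeq θ (m + j) + cosSeq θ (m - j) = 2 * Real.cos (2 * j * θ) * cosSeq θ m := by
  simp only [cosSeq]
  rw [Real.two_mul_cos_mul_cos, add_comm, ← Real.cos_neg (2 * j * θ - _)]
  push_cast
  ring_nf

theorem two_mul_cosSeq_mul_cosSeq (m : ℤ) :
    2 * cosSeq θ m * cosSeq φ m = cosSeq (θ - φ) m + cosSeq (θ + φ) m := by
  simp only [cosSeq, Real.two_mul_cos_mul_cos, mul_sub, mul_add]

theorem two_mul_sin_mul_sum_cosSeq (n : ℕ) :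
    2 * Real.sin θ * ∑ j : Fin n, cosSeq θ j = Real.sin (2 * n * θ) := by
  have htelescope (j : ℕ) : 2 * Real.sin θ * cosSeq θ j =
      Real.sin (2 * (j + 1 : ℕ) * θ) - Real.sin (2 * j * θ) := by
    rw [cosSeq, Real.sin_sub_sin]
    push_cast
    ring_nf
  rw [Fin.sum_univ_eq_sum_range (fun j ↦ cosSeq θ j), Finset.mul_sum,
    Finset.sum_congr rfl fun j _ ↦ htelescope j,
    Finset.sum_range_sub fun j : ℕ ↦ Real.sin (2 * j * θ)]
  simp

end CosSeq

/-- The angle `zπ / (2n)`, the base frequency of row `z` of the DCT matrix. Integer `z` is allowed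
so that sums and differences of row frequencies are again of this form. -/
def dctAngle (n : ℕ) (z : ℤ) : ℝ :=
  z * Real.pi / (2 * n)

/-- The factor `√((2 − δ_{k0}) / n)` normalizing row `k` of the DCT matrix. -/
def dctScale (n k : ℕ) : ℝ :=
  Real.sqrt ((2 - if k = 0 then 1 else 0) / n)

section DCT

variable {n : ℕ}

theorem two_mul_mul_dctAngle (hn : 0 < n) (z : ℤ) : 2 * n * dctAngle n z = z * Real.pi := by
  unfold dctAngle
  field_simp

theorem sin_dctAngle_ne_zero {z : ℤ} (hz : z ≠ 0) (hzn : |z| < 2 * n) :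
    Real.sin (dctAngle n z) ≠ 0 := by
  have hn : 0 < n := by have := abs_nonneg z; omega
  intro hsin
  obtain ⟨t, ht⟩ := Real.sin_eq_zero_iff.mp hsin
  have hzt : z = 2 * n * t := by
    have h : (2 * n * t : ℝ) * Real.pi = z * Real.pi := by
      rw [← two_mul_mul_dctAngle hn, ← ht, mul_assoc]
    exact_mod_cast (mul_right_cancel₀ Real.pi_ne_zero h).symm
  exact hz (Int.eq_zero_of_abs_lt_dvd ⟨t, hzt⟩ hzn)

theorem sum_cosSeq_dctAngle {z : ℤ} (hzn : |z| < 2 * n) :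
    ∑ j : Fin n, cosSeq (dctAngle n z) j = if z = 0 then (n : ℝ) else 0 := by
  split_ifs with hz
  · simp [hz, dctAngle, cosSeq]
  · have hn : 0 < n := by have := abs_nonneg z; omega
    have hsum := two_mul_sin_mul_sum_cosSeq (dctAngle n z) n
    rw [two_mul_mul_dctAngle hn, Real.sin_int_mul_pi] at hsum
    exact (mul_eq_zero.mp hsum).resolve_left
      (mul_ne_zero two_ne_zero (sin_dctAngle_ne_zero hz hzn))

theorem two_mul_sum_cosSeq_dctAngle_mul (k l : Fin n) :
    2 * ∑ j : Fin n, cosSeq (dctAngle n k) j * cosSeq (dctAngle n l) j =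
      (if k = l then (n : ℝ) else 0) + if (k : ℕ) = 0 ∧ (l : ℕ) = 0 then (n : ℝ) else 0 := by
  have hsub : dctAngle n k - dctAngle n l = dctAngle n (k - l) := by
    simp only [dctAngle]; push_cast; ring
  have hadd : dctAngle n k + dctAngle n l = dctAngle n (k + l) := by
    simp only [dctAngle]; push_cast; ring
  simp only [Finset.mul_sum, ← mul_assoc, two_mul_cosSeq_mul_cosSeq, Finset.sum_add_distrib,
    hsub, hadd]
  rw [sum_cosSeq_dctAngle (by rw [abs_lt]; omega), sum_cosSeq_dctAngle (by rw [abs_lt]; omega)]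
  congr 2 <;> grind

theorem dctScale_pos (hn : 0 < n) (k : ℕ) : 0 < dctScale n k := by
  unfold dctScale
  split_ifs <;> norm_num <;> positivity

theorem dctScale_mul_self (n k : ℕ) :
    dctScale n k * dctScale n k = (2 - if k = 0 then 1 else 0) / n :=
  Real.mul_self_sqrt (div_nonneg (by split_ifs <;> norm_num) n.cast_nonneg)

theorem dctMatrix_apply (k j : Fin n) :
    dctMatrix n k j = dctScale n k * cosSeq (dctAngle n k) j := by
  simp only [dctMatrix, Matrix.of_apply, dctScale, cosSeq, dctAngle]
  push_cast
  ring_nf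

theorem dctMatrix_mul_transpose (n : ℕ) : dctMatrix n * (dctMatrix n)ᵀ = 1 := by
  ext k l
  have hn : (n : ℝ) ≠ 0 := Nat.cast_ne_zero.mpr k.pos.ne'
  have hentry : (dctMatrix n * (dctMatrix n)ᵀ) k l = dctScale n k * dctScale n l *
      ∑ j : Fin n, cosSeq (dctAngle n k) j * cosSeq (dctAngle n l) j := by
    simp only [Matrix.mul_apply, Matrix.transpose_apply, dctMatrix_apply, Finset.mul_sum,
      mul_mul_mul_comm]
  have hsum := two_mul_sum_cosSeq_dctAngle_mul k l
  rw [hentry]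
  obtain rfl | hkl := eq_or_ne k l
  · rw [Matrix.one_apply_eq, dctScale_mul_self]
    split_ifs at hsum ⊢ <;> grind
  · have hne : ¬((k : ℕ) = 0 ∧ (l : ℕ) = 0) := fun h ↦ hkl (Fin.ext (h.1.trans h.2.symm))
    rw [if_neg hkl, if_neg hne, add_zero, mul_eq_zero_iff_left two_ne_zero] at hsum
    rw [Matrix.one_apply_ne hkl, hsum, mul_zero]

theorem dctMatrix_col_zero_ne_zero (hn : 0 < n) (k : Fin n) : dctMatrix n k ⟨0, hn⟩ ≠ 0 := by
  have hcos : 0 < Real.cos (dctAngle n k) := by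
    have hkn : (k : ℝ) < n := by exact_mod_cast k.isLt
    have hnonneg : 0 ≤ dctAngle n k := by unfold dctAngle; positivity
    have hlt : dctAngle n k < Real.pi / 2 := by
      have := two_mul_mul_dctAngle hn k
      push_cast at this
      nlinarith [Real.pi_pos]
    exact Real.cos_pos_of_mem_Ioo ⟨by linarith [Real.pi_pos], hlt⟩
  rw [dctMatrix_apply]
  refine mul_ne_zero (dctScale_pos hn k).ne' ?_
  simpa [cosSeq] using hcos.ne'

theorem exists_cosSeq_vecMul_thMat_single {θ : ℝ} (hθ : HalfSampleSymmetric n (cosSeq θ))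
    (j : Fin n) :
    ∃ μ : ℝ, (fun p : Fin n ↦ cosSeq θ p) ᵥ* thMat (Pi.single j 1) =
      μ • fun p : Fin n ↦ cosSeq θ p := by
  obtain hj | hj := eq_or_ne (j : ℕ) 0
  · exact ⟨1, by rw [thMat_single_eq_one hj, Matrix.vecMul_one, one_smul]⟩
  · refine ⟨2 * Real.cos (2 * j * θ), ?_⟩
    rw [hθ.vecMul_thMat_single hj]
    ext q
    exact_mod_cast cosSeq_add_add_cosSeq_sub θ q j

theorem exists_cosSeq_vecMul_thMat {θ : ℝ} (hθ : HalfSampleSymmetric n (cosSeq θ))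
    (v : Fin n → ℝ) :
    ∃ μ : ℝ, (fun p : Fin n ↦ cosSeq θ p) ᵥ* thMat v = μ • fun p : Fin n ↦ cosSeq θ p := by
  choose μ hμ using exists_cosSeq_vecMul_thMat_single hθ
  refine ⟨∑ j, v j * μ j, ?_⟩
  rw [thMat_eq_sum_single, Matrix.vecMul_sum, Finset.sum_smul]
  exact Finset.sum_congr rfl fun j _ ↦ by rw [Matrix.vecMul_smul, hμ, smul_smul]

theorem exists_dctMatrix_mul_thMat_eq (v : Fin n → ℝ) :
    ∃ d : Fin n → ℝ, dctMatrix n * thMat v = Matrix.diagonal d * dctMatrix n := by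
  have hsymm (k : Fin n) : HalfSampleSymmetric n (cosSeq (dctAngle n k)) :=
    halfSampleSymmetric_cosSeq _ (two_mul_mul_dctAngle k.pos k)
  choose d hd using fun k ↦ exists_cosSeq_vecMul_thMat (hsymm k) v
  have hrow (k : Fin n) :
      (dctMatrix n).row k = dctScale n k • fun p : Fin n ↦ cosSeq (dctAngle n k) p :=
    funext (dctMatrix_apply k)
  refine ⟨d, Matrix.ext_row fun k ↦ ?_⟩
  calc (dctMatrix n * thMat v).row k = (dctMatrix n).row k ᵥ* thMat v := rfl
    _ = d k • (dctMatrix n).row k := by rw [hrow, Matrix.smul_vecMul, hd, smul_comm]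
    _ = (Matrix.diagonal d * dctMatrix n).row k := by ext q; simp [Matrix.diagonal_mul]

theorem isUnit_Wdiag (n : ℕ) : IsUnit (Wdiag n) := by
  rw [Wdiag, Matrix.isUnit_diagonal, Pi.isUnit_iff]
  exact fun k ↦ (dctMatrix_col_zero_ne_zero k.pos k).isUnit

theorem transformM_mulVec_of_dctMatrix_mul_thMat_eq (hn : 0 < n) {v d : Fin n → ℝ}
    (h : dctMatrix n * thMat v = Matrix.diagonal d * dctMatrix n) :
    transformM n *ᵥ v = d := by
  let := (isUnit_Wdiag n).invertible
  rw [transformM, ← Matrix.mulVec_mulVec, ← Matrix.mulVec_mulVec]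
  apply Matrix.inv_mulVec_eq_vec
  calc dctMatrix n *ᵥ ((1 + upshift n) *ᵥ v)
      = dctMatrix n *ᵥ (thMat v).col ⟨0, hn⟩ := by rw [thMat_col_zero]
    _ = (dctMatrix n * thMat v).col ⟨0, hn⟩ := rfl
    _ = (Matrix.diagonal d * dctMatrix n).col ⟨0, hn⟩ := by rw [h]
    _ = Wdiag n *ᵥ d := by
      ext k
      simp [Wdiag, Matrix.diagonal_mul, Matrix.mulVec_diagonal, mul_comm]

end DCT

/-- for every `v ∈ ℝⁿ`, the Toeplitz-plus-Hankel matrix `th(v)` is diagonalized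
by the DCT matrix: `C_n · th(v) · C_nᵀ = Diag(M v)` where `M = W⁻¹ C_n (I + Z)`. -/
theorem dct_diagonalizes_thMat (n : ℕ) (hn : 1 ≤ n) (v : Fin n → ℝ) :
    dctMatrix n * thMat v * (dctMatrix n)ᵀ =
      Matrix.diagonal ((transformM n).mulVec v) := by
  obtain ⟨d, hd⟩ := exists_dctMatrix_mul_thMat_eq v
  rw [hd, Matrix.mul_assoc, dctMatrix_mul_transpose, Matrix.mul_one,
    transformM_mulVec_of_dctMatrix_mul_thMat_eq hn hd]

end
end

section
/- The c-product is well defined: for all tensors A ∈ ℝ^{n1×n2×n3} and B ∈ ℝ^{n2×m×n3}, there exists a unique tensor C ∈ ℝ^{n1×m×n3} such that mat(C) = mat(A) · mat(B); that is, the class of block Toeplitz-plus-Hankel matrices of the form mat(·) is closed under matrix multiplication. -/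
open Matrix BigOperators Kronecker

noncomputable section

/-
Read a tensor as a `2 * n3`-periodic even function that vanishes at `n3`. The `(p, q)` block of
`mat` is then `f (p - q) + f (p + q + 1)`, an expression that makes sense for every even periodic
`f`, and `r ↦ -1 - r` exchanges its two terms as well as the two halves of `ZMod (2 * n3)`.
Unfolding the block product along this reflection turns it into a sum over a full period, so that
products of such matrices correspond to cyclic convolutions. A convolution of even functions is
even but need not vanish at `n3`; subtracting a multiple of the alternating function repairs
this without changing the matrix, because `p - q` and `p + q + 1` have opposite parity.
-/

section EvenExtension

variable {M : Type*} [Zero M] {n : ℕ}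

/-- The extension of a tuple to an even function of period `2 * n`, with the value `0` at `n`, the
one residue that is not of the form `± t` with `t < n`. -/
def evenExt (v : Fin n → M) (k : ZMod (2 * n)) : M :=
  if h : k.valMinAbs.natAbs < n then v ⟨k.valMinAbs.natAbs, h⟩ else 0

lemma evenExt_even (v : Fin n → M) : (evenExt v).Even := fun k => by
  simp only [evenExt, ZMod.natAbs_valMinAbs_neg]

lemma natAbs_valMinAbs_natCast_of_le {t : ℕ} (ht : t ≤ n) :
    (t : ZMod (2 * n)).valMinAbs.natAbs = t := by
  rw [ZMod.valMinAbs_natCast_of_le_half (by omega), Int.natAbs_natCast]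

lemma evenExt_natCast (v : Fin n → M) {t : ℕ} (ht : t < n) : evenExt v t = v ⟨t, ht⟩ := by
  simp only [evenExt, natAbs_valMinAbs_natCast_of_le ht.le, ht, dite_true]

lemma evenExt_natCast_self (v : Fin n → M) : evenExt v n = 0 := by
  simp only [evenExt, natAbs_valMinAbs_natCast_of_le le_rfl, lt_irrefl, dite_false]

lemma evenExt_restrict [NeZero n] {f : ZMod (2 * n) → M} (hf : f.Even) (hfn : f n = 0) :
    evenExt (fun t : Fin n => f (t : ℕ)) = f := by
  funext k
  have hk : f k.valMinAbs.natAbs = f k := by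
    rw [ZMod.natCast_natAbs_valMinAbs]
    split_ifs
    exacts [rfl, hf k]
  have hle := k.natAbs_valMinAbs_le
  unfold evenExt
  split_ifs with h
  · exact hk
  · rw [← hk, show k.valMinAbs.natAbs = n by omega, hfn]

lemma evenExt_natCast_sub (v : Fin n → M) (p q : Fin n) :
    evenExt v ((p : ℕ) - (q : ℕ)) = v ⟨Nat.dist p q, by simp only [Nat.dist]; omega⟩ := by
  rw [← evenExt_natCast v]
  rcases le_total (p : ℕ) q with h | h
  · rw [Nat.dist_eq_sub_of_le h, ← evenExt_even v, Nat.cast_sub h, neg_sub]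
  · rw [Nat.dist_eq_sub_of_le_right h, Nat.cast_sub h]

end EvenExtension

section ToeplitzHankel

variable {M : Type*} {n : ℕ}

/-- The Toeplitz-plus-Hankel matrix of a periodic function: the common shape of `tmat` and `thMat`,
with entries in an arbitrary type so that they can be blocks. -/
def toeplitzHankel [Add M] (f : ZMod (2 * n) → M) : Matrix (Fin n) (Fin n) M :=
  Matrix.of fun p q => f ((p : ℕ) - (q : ℕ)) + f ((p : ℕ) + (q : ℕ) + 1)

lemma toeplitzHankel_apply [Add M] (f : ZMod (2 * n) → M) (p q : Fin n) :
    toeplitzHankel f p q = f ((p : ℕ) - (q : ℕ)) + f ((p : ℕ) + (q : ℕ) + 1) :=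
  rfl

lemma toeplitzHankel_evenExt_injective [AddRightCancelMonoid M] :
    Function.Injective fun v : Fin n → M => toeplitzHankel (evenExt v) := by
  intro v w hvw
  -- The first column holds the sums of consecutive values, so these are recovered downwards from
  -- the common value at `n`.
  have heq : ∀ t ≤ n, evenExt v t = evenExt w t := by
    intro t ht
    induction ht using Nat.decreasingInduction with
    | self => rw [evenExt_natCast_self, evenExt_natCast_self]
    | of_succ t ht ih =>
      have hcol := congrFun₂ hvw ⟨t, ht⟩ ⟨0, by omega⟩
      simp only [toeplitzHankel_apply, Nat.cast_zero, sub_zero, add_zero, ← Nat.cast_add_one,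
        ih] at hcol
      exact add_right_cancel hcol
  funext t
  rw [← evenExt_natCast v t.isLt, ← evenExt_natCast w t.isLt, heq t t.isLt.le]

/-- The alternating function `k ↦ (-1) ^ k` on residues modulo `2 * n`, which is well defined
because the modulus is even. -/
def alternatingSign (k : ZMod (2 * n)) : ℤˣ :=
  (-1) ^ ZMod.castHom (Dvd.intro n rfl : 2 ∣ 2 * n) (ZMod 2) k

lemma alternatingSign_even : (alternatingSign (n := n)).Even := fun k => by
  rw [alternatingSign, map_neg, ZMod.neg_eq_self_mod_two, alternatingSign]

lemma alternatingSign_add_add_one (p q : ZMod (2 * n)) :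
    alternatingSign (p + q + 1) = -alternatingSign (p - q) := by
  simp only [alternatingSign, map_add, map_sub, map_one, uzpow_add, uzpow_sub, uzpow_one,
    mul_neg_one, Int.units_div_eq_mul]

lemma toeplitzHankel_sub_alternatingSign_smul [AddCommGroup M] (f : ZMod (2 * n) → M) (c : M) :
    toeplitzHankel (fun k => f k - alternatingSign k • c) = toeplitzHankel f := by
  ext p q
  simp only [toeplitzHankel_apply, alternatingSign_add_add_one, Units.neg_smul]
  abel

lemma exists_toeplitzHankel_evenExt_eq [AddCommGroup M] [NeZero n] {f : ZMod (2 * n) → M}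
    (hf : f.Even) : ∃ v : Fin n → M, toeplitzHankel (evenExt v) = toeplitzHankel f := by
  let c : M := alternatingSign (n : ZMod (2 * n)) • f n
  let g : ZMod (2 * n) → M := fun k => f k - alternatingSign k • c
  have hg : g.Even := fun k => by simp only [g, hf k, alternatingSign_even k]
  have hgn : g n = 0 := by
    simp only [g, c, smul_smul, Int.units_mul_self, one_smul, sub_self]
  exact ⟨_, (congrArg toeplitzHankel (evenExt_restrict hg hgn)).trans
    (toeplitzHankel_sub_alternatingSign_smul f c)⟩

/-- The matrix `mat(A)` of a tensor whose slices have arbitrary index types and entries; over `ℝ`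
it is `tmat`, see `tmat_eq_blockToeplitzHankel`. -/
def blockToeplitzHankel {l m R : Type*} [Add R] [Zero R] (A : Fin n → Matrix l m R) :
    Matrix (Fin n × l) (Fin n × m) R :=
  Matrix.comp _ _ _ _ _ (toeplitzHankel (evenExt A))

end ToeplitzHankel

section CyclicConvolution

variable {G l m o R : Type*} [AddCommGroup G] [Fintype G] [Fintype m]
  [NonUnitalNonAssocSemiring R]

/-- The convolution of two matrix-valued functions on a finite abelian group. -/
def cyclicConv (f : G → Matrix l m R) (g : G → Matrix m o R) (k : G) : Matrix l o R :=
  ∑ x, f (k - x) * g x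

lemma cyclicConv_even {f : G → Matrix l m R} {g : G → Matrix m o R} (hf : f.Even) (hg : g.Even) :
    (cyclicConv f g).Even := fun k =>
  Fintype.sum_equiv (Equiv.neg G) _ _ fun x => by
    rw [Equiv.neg_apply, hg, ← hf, neg_sub', neg_neg]

lemma sum_mul_sub_eq_cyclicConv (f : G → Matrix l m R) (g : G → Matrix m o R) (a b : G) :
    ∑ x, f (a - x) * g (x - b) = cyclicConv f g (a - b) :=
  Fintype.sum_equiv (Equiv.subRight b) _ _ fun x => by
    rw [Equiv.subRight_apply, sub_sub_sub_cancel_right]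

end CyclicConvolution

section PeriodicSum

variable {M : Type*} [AddCommMonoid M]

lemma sum_zmod_eq_sum_range {N : ℕ} [NeZero N] (h : ZMod N → M) :
    ∑ x, h x = ∑ r ∈ Finset.range N, h r :=
  Finset.sum_nbij' ZMod.val Nat.cast (fun x _ => Finset.mem_range.2 x.val_lt)
    (fun _ _ => Finset.mem_univ _) (fun x _ => ZMod.natCast_zmod_val x)
    (fun _ hr => ZMod.val_cast_of_lt (Finset.mem_range.1 hr))
    fun x _ => by rw [ZMod.natCast_zmod_val]

lemma sum_zmod_two_mul_eq_sum_fin {n : ℕ} [NeZero n] (h : ZMod (2 * n) → M) :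
    ∑ x, h x = ∑ r : Fin n, (h (r : ℕ) + h (-1 - (r : ℕ))) := by
  have hreflect : ∀ r < n, ((n + (n - 1 - r) : ℕ) : ZMod (2 * n)) = -1 - r := by
    intro r hr
    rw [show n + (n - 1 - r) = 2 * n - (1 + r) by omega, Nat.cast_sub (by omega),
      ZMod.natCast_self, Nat.cast_add, Nat.cast_one]
    ring
  calc ∑ x, h x = ∑ r ∈ Finset.range (n + n), h r := by
        rw [sum_zmod_eq_sum_range, ← two_mul]
    _ = ∑ r ∈ Finset.range n, h r + ∑ r ∈ Finset.range n, h (n + (n - 1 - r) : ℕ) := by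
      rw [Finset.sum_range_add, Finset.sum_range_reflect (fun r => h (n + r : ℕ))]
    _ = ∑ r ∈ Finset.range n, (h r + h (-1 - r)) := by
      rw [Finset.sum_add_distrib]
      congr 1
      exact Finset.sum_congr rfl fun r hr => by rw [hreflect r (Finset.mem_range.1 hr)]
    _ = _ := (Fin.sum_univ_eq_sum_range (fun r => h r + h (-1 - r)) n).symm

end PeriodicSum

section BlockProduct

variable {l m o R : Type*} [Fintype m] {n : ℕ}

lemma sum_toeplitzHankel_mul [NonUnitalNonAssocSemiring R] [NeZero n]
    (f : ZMod (2 * n) → Matrix l m R) {g : ZMod (2 * n) → Matrix m o R} (hg : g.Even)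
    (p q : Fin n) :
    ∑ r, toeplitzHankel f p r * toeplitzHankel g r q = toeplitzHankel (cyclicConv f g) p q := by
  let P : ZMod (2 * n) := (p : ℕ)
  let Q : ZMod (2 * n) := (q : ℕ)
  let column : ZMod (2 * n) → Matrix m o R := fun x => g (x - Q) + g (x + Q + 1)
  have hcolumn : ∀ x, column (-1 - x) = column x := fun x => by
    simp only [column]
    rw [show -1 - x - Q = -(x + Q + 1) by ring, show -1 - x + Q + 1 = -(x - Q) by ring, hg, hg,
      add_comm]
  calc ∑ r : Fin n, (f (P - (r : ℕ)) + f (P + (r : ℕ) + 1)) * column (r : ℕ)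
      = ∑ r : Fin n, (f (P - (r : ℕ)) * column (r : ℕ) +
          f (P - (-1 - (r : ℕ))) * column (-1 - (r : ℕ))) := by
        refine Finset.sum_congr rfl fun r _ => ?_
        rw [hcolumn, Matrix.add_mul, show P - (-1 - (r : ℕ)) = P + (r : ℕ) + 1 by ring]
    _ = ∑ x, f (P - x) * column x :=
        (sum_zmod_two_mul_eq_sum_fin fun x => f (P - x) * column x).symm
    _ = ∑ x, f (P - x) * g (x - Q) + ∑ x, f (P - x) * g (x - (-(Q + 1))) := by
        simp only [column, Matrix.mul_add, Finset.sum_add_distrib, sub_neg_eq_add, add_assoc]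
    _ = cyclicConv f g (P - Q) + cyclicConv f g (P + Q + 1) := by
        rw [sum_mul_sub_eq_cyclicConv, sum_mul_sub_eq_cyclicConv, sub_neg_eq_add, add_assoc]

lemma comp_mul_comp {ι κ τ : Type*} [Fintype κ] [NonUnitalNonAssocSemiring R]
    (X : Matrix ι κ (Matrix l m R)) (Y : Matrix κ τ (Matrix m o R)) :
    Matrix.comp ι κ l m R X * Matrix.comp κ τ m o R Y =
      Matrix.comp ι τ l o R (Matrix.of fun p q => ∑ r, X p r * Y r q) := by
  ext ⟨p, i⟩ ⟨q, j⟩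
  simp only [Matrix.mul_apply, Matrix.comp_apply, Matrix.of_apply, Matrix.sum_apply,
    Fintype.sum_prod_type]

theorem cProd_existsUnique_general [NonUnitalNonAssocRing R]
    (A : Fin n → Matrix l m R) (B : Fin n → Matrix m o R) :
    ∃! C : Fin n → Matrix l o R,
      blockToeplitzHankel C = blockToeplitzHankel A * blockToeplitzHankel B := by
  rcases n.eq_zero_or_pos with rfl | hn
  · exact ⟨0, Subsingleton.elim _ _, fun _ _ => Subsingleton.elim _ _⟩
  have : NeZero n := ⟨hn.ne'⟩
  have hprod : (Matrix.of fun p q =>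
      ∑ r, toeplitzHankel (evenExt A) p r * toeplitzHankel (evenExt B) r q) =
        toeplitzHankel (cyclicConv (evenExt A) (evenExt B)) :=
    Matrix.ext fun p q => sum_toeplitzHankel_mul _ (evenExt_even B) p q
  simp only [blockToeplitzHankel, comp_mul_comp, hprod, EmbeddingLike.apply_eq_iff_eq]
  obtain ⟨C, hC⟩ :=
    exists_toeplitzHankel_evenExt_eq (cyclicConv_even (evenExt_even A) (evenExt_even B))
  exact ⟨C, hC, fun D hD => toeplitzHankel_evenExt_injective (hD.trans hC.symm)⟩

end BlockProduct

section Tensor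

variable {n1 n2 n3 : ℕ} (A : Fin n3 → Matrix (Fin n1) (Fin n2) ℝ)

lemma hankelPart_eq_evenExt (p q : Fin n3) :
    hankelPart A p q = evenExt A ((p : ℕ) + (q : ℕ) + 1) := by
  rw [← Nat.cast_add, ← Nat.cast_add_one]
  unfold hankelPart
  split_ifs with hlt heq
  · rw [evenExt_natCast A hlt]
  · rw [heq, evenExt_natCast_self]
  · rw [← evenExt_natCast A, ← evenExt_even A, Nat.sub_sub, Nat.cast_sub (by omega),
      ZMod.natCast_self, zero_sub, neg_neg]

lemma tmat_eq_blockToeplitzHankel : tmat A = blockToeplitzHankel A := by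
  ext ⟨p, i⟩ ⟨q, j⟩
  rw [blockToeplitzHankel, Matrix.comp_apply, toeplitzHankel_apply, evenExt_natCast_sub,
    ← hankelPart_eq_evenExt]
  rfl

end Tensor

/-- the c-product is well defined: for all tensors `A ∈ ℝ^{n1×n2×n3}` and
`B ∈ ℝ^{n2×m×n3}` there is a unique tensor `C ∈ ℝ^{n1×m×n3}` with
`mat(C) = mat(A) · mat(B)`. -/
theorem cProd_existsUnique {n1 n2 m n3 : ℕ}
    (A : Fin n3 → Matrix (Fin n1) (Fin n2) ℝ) (B : Fin n3 → Matrix (Fin n2) (Fin m) ℝ) :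
    ∃! C : Fin n3 → Matrix (Fin n1) (Fin m) ℝ, tmat C = tmat A * tmat B := by
  simpa only [tmat_eq_blockToeplitzHankel] using cProd_existsUnique_general A B

end
end

section
/- A tensor A ∈ ℝ^{n×n×n3} is invertible with respect to the c-product if and only if the matrix mat(A) is invertible; that is, there exists a tensor B ∈ ℝ^{n×n×n3} with mat(A)·mat(B) = I_{n·n3} and mat(B)·mat(A) = I_{n·n3} if and only if mat(A) is an invertible matrix. (The nontrivial direction is that the inverse of an invertible matrix of the form mat(A) is again of the form mat(B) for some tensor B.) -/
open Matrix BigOperators Kronecker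

noncomputable section

/-!
The matrices of the form `mat(A)` are exactly those commuting with `T ⊗ 1`, where `T` is the
adjacency matrix of a path with a loop at each end; an inverse of a matrix commuting with `T ⊗ 1`
commutes with `T ⊗ 1` as well.

Blockwise this says that the commutant of `T` consists of the Toeplitz-plus-Hankel matrices `th(v)`.
Extending `v` to an even function `V` on `ℤ`, also even about `n`, the entries of `th(v)` are
`V (p - q) + V (p + q + 1)`. This function of `(p, q)` solves the discrete wave equation, and the
symmetries of `V` are the reflecting boundary conditions encoded by the loops, so `th(v)` commutes
with `T`. Conversely, a matrix commuting with `T` is determined by its first column, and that of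
`th(v)` is `v p + v (p + 1)` with `v n = 0`, which can be prescribed arbitrarily.
-/

section ReflectingPath

variable {ι : Type*} [LinearOrder ι] [SuccOrder ι] [PredOrder ι] {R : Type*}

/-- The adjacency matrix of the path on `ι` with a loop at each end, that is, `2` minus the
discrete Neumann Laplacian; the matrices `mat(A)` are those commuting with it blockwise. The loops
arise because `Order.succ` fixes the maximum and `Order.pred` the minimum. -/
def reflectingPath (ι R : Type*) [LinearOrder ι] [SuccOrder ι] [PredOrder ι] [AddMonoidWithOne R] :
    Matrix ι ι R :=
  Matrix.of fun p q => (if q = Order.succ p then 1 else 0) + (if q = Order.pred p then 1 else 0)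

lemma eq_pred_iff_eq_succ_of_lt {p q : ι} (h : p < q) : p = Order.pred q ↔ q = Order.succ p := by
  rw [eq_comm, eq_comm (a := q)]
  exact ⟨fun e => e ▸ Order.succ_pred_of_not_isMin h.not_isMin,
    fun e => e ▸ Order.pred_succ_of_not_isMax h.not_isMax⟩

lemma reflectingPath_isSymm [AddMonoidWithOne R] : (reflectingPath ι R).IsSymm := by
  refine Matrix.IsSymm.ext_iff.mpr fun p q => ?_
  wlog h : p < q generalizing p q
  · rcases (not_lt.mp h).eq_or_lt with rfl | hlt
    · rfl
    · exact (this q p hlt).symm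
  have hqp : p ≠ Order.succ q := (h.trans_le (Order.le_succ q)).ne
  have hpq : q ≠ Order.pred p := ((Order.pred_le p).trans_lt h).ne'
  simp only [reflectingPath, of_apply, eq_pred_iff_eq_succ_of_lt h, if_neg hqp, if_neg hpq,
    zero_add, add_zero]

variable [Fintype ι]

lemma reflectingPath_mul_apply [NonAssocSemiring R] {κ : Type*} (M : Matrix ι κ R) (p : ι) (q : κ) :
    (reflectingPath ι R * M) p q = M (Order.succ p) q + M (Order.pred p) q := by
  simp [reflectingPath, mul_apply, add_mul, Finset.sum_add_distrib]

lemma mul_reflectingPath_apply [NonAssocSemiring R] {κ : Type*} (M : Matrix κ ι R) (p : κ) (q : ι) :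
    (M * reflectingPath ι R) p q = M p (Order.succ q) + M p (Order.pred q) := by
  rw [← reflectingPath_isSymm]
  simp [reflectingPath, mul_apply, mul_add, Finset.sum_add_distrib]

-- Commutation expresses column `succ r` of `M` through columns `r` and `pred r`.
lemma eq_zero_of_commute_reflectingPath [NonAssocSemiring R] {M : Matrix ι ι R}
    (hM : Commute (reflectingPath ι R) M) (h_min : ∀ p q, IsMin q → M p q = 0) : M = 0 := by
  suffices ∀ q p, M p q = 0 from Matrix.ext fun p q => this q p
  intro q
  induction q using WellFoundedLT.induction with
  | _ q ih =>
    intro p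
    by_cases hq : IsMin q
    · exact h_min p q hq
    have hr : Order.pred q < q := Order.pred_lt_of_not_isMin hq
    have hrr : Order.pred (Order.pred q) < q := (Order.pred_le _).trans_lt hr
    have h_entry := congr_fun₂ hM.eq p (Order.pred q)
    rw [reflectingPath_mul_apply, mul_reflectingPath_apply, Order.succ_pred_of_not_isMin hq,
      ih _ hr, ih _ hr, ih _ hrr, add_zero, add_zero] at h_entry
    exact h_entry.symm

end ReflectingPath

section EvenExtension

variable {n : ℕ} {R : Type*}

/-- The extension of `v` from `{0, …, n - 1}` to a function of `k ∈ ℤ` that is even about `0` and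
about `n` and vanishes at `n`. The index `n - |n - |k||` folds `[-2n, 2n]` onto `[0, n]`; the values
outside `[-2n, 2n]` are irrelevant. -/
def evenExtend [Zero R] (v : Fin n → R) (k : ℤ) : R :=
  if h : n - (n - k.natAbs : ℤ).natAbs < n then v ⟨_, h⟩ else 0

lemma evenExtend_of_natAbs_eq [Zero R] (v : Fin n → R) {k : ℤ} {m : Fin n}
    (h : k.natAbs = m) : evenExtend v k = v m := by
  have h_fold : n - (n - k.natAbs : ℤ).natAbs = m := by lia
  simp only [evenExtend, h_fold, m.isLt, dite_true]

lemma evenExtend_self [Zero R] (v : Fin n → R) : evenExtend v n = 0 := by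
  simp [evenExtend]

lemma evenExtend_eq_of_add_eq_zero [Zero R] (v : Fin n → R) {k l : ℤ} (h : k + l = 0) :
    evenExtend v k = evenExtend v l := by
  have h_natAbs : k.natAbs = l.natAbs := by lia
  simp only [evenExtend, h_natAbs]

lemma evenExtend_eq_of_add_eq_two_mul [Zero R] (v : Fin n → R) {k l : ℤ} (hk : 0 ≤ k)
    (hl : 0 ≤ l) (h : k + l = 2 * n) : evenExtend v k = evenExtend v l := by
  have h_fold : (n - k.natAbs : ℤ).natAbs = (n - l.natAbs : ℤ).natAbs := by lia
  simp only [evenExtend, h_fold]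

/-- The Toeplitz-plus-Hankel kernel `V (x - y) + V (x + y + 1)` on `ℤ × ℤ`, where `V` is the even
extension of `v`. On `{0, …, n - 1}²` it gives the entries of `thMat v`, and on `ℤ × ℤ` its
difference equation has no boundary cases. -/
def thKernel [AddZeroClass R] (v : Fin n → R) (x y : ℤ) : R :=
  evenExtend v (x - y) + evenExtend v (x + y + 1)

lemma thKernel_comm [AddZeroClass R] (v : Fin n → R) (x y : ℤ) :
    thKernel v x y = thKernel v y x := by
  rw [thKernel, thKernel, add_comm x y,
    evenExtend_eq_of_add_eq_zero v (by ring : x - y + (y - x) = 0)]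

lemma thKernel_wave [AddCommMonoid R] (v : Fin n → R) (x y : ℤ) :
    thKernel v (x + 1) y + thKernel v (x - 1) y = thKernel v x (y + 1) + thKernel v x (y - 1) := by
  simp only [thKernel]
  rw [show x + 1 - y = x - (y - 1) by ring, show x + 1 + y + 1 = x + (y + 1) + 1 by ring,
    show x - 1 - y = x - (y + 1) by ring, show x - 1 + y + 1 = x + (y - 1) + 1 by ring]
  abel

lemma thKernel_orderSucc [AddCommMonoid R] (v : Fin n → R) (p q : Fin n) :
    thKernel v (Order.succ p : Fin n) q = thKernel v (p + 1) q := by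
  cases n with
  | zero => exact p.elim0
  | succ n =>
    cases p using Fin.lastCases with
    | cast p => simp
    | last =>
      rw [Fin.orderSucc_last, Fin.val_last, thKernel, thKernel, add_comm]
      have hq := q.isLt
      congr 1 <;> apply evenExtend_eq_of_add_eq_two_mul <;> push_cast <;> lia

lemma thKernel_orderPred [AddCommMonoid R] (v : Fin n → R) (p q : Fin n) :
    thKernel v (Order.pred p : Fin n) q = thKernel v (p - 1) q := by
  cases n with
  | zero => exact p.elim0
  | succ n =>
    cases p using Fin.cases with
    | succ p => simp
    | zero =>
      rw [Fin.orderPred_zero, Fin.val_zero, thKernel, thKernel, add_comm]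
      congr 1 <;> apply evenExtend_eq_of_add_eq_zero <;> push_cast <;> ring

end EvenExtension

section ThMat

variable {n : ℕ}

lemma thMat_apply (v : Fin n → ℝ) (p q : Fin n) : thMat v p q = thKernel v p q := by
  simp only [thMat, of_apply, thKernel]
  congr 1
  · exact (evenExtend_of_natAbs_eq v (by simp only [Nat.dist]; lia)).symm
  · split_ifs with h_lt h_eq
    · exact (evenExtend_of_natAbs_eq v (by simp only; lia)).symm
    · rw [← evenExtend_self v]
      congr 1
      exact_mod_cast h_eq.symm
    · rw [evenExtend_eq_of_add_eq_two_mul v (k := p + q + 1) (l := 2 * n - (p + q) - 1)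
        (by lia) (by lia) (by ring)]
      exact (evenExtend_of_natAbs_eq v (by simp only; lia)).symm

lemma commute_reflectingPath_thMat (v : Fin n → ℝ) :
    Commute (reflectingPath (Fin n) ℝ) (thMat v) := by
  ext p q
  calc (reflectingPath (Fin n) ℝ * thMat v) p q
      = thKernel v (p + 1) q + thKernel v (p - 1) q := by
        rw [reflectingPath_mul_apply, thMat_apply, thMat_apply, thKernel_orderSucc,
          thKernel_orderPred]
    _ = thKernel v (q + 1) p + thKernel v (q - 1) p := by
        rw [thKernel_wave, thKernel_comm v _ (_ + 1), thKernel_comm v _ (_ - 1)]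
    _ = (thMat v * reflectingPath (Fin n) ℝ) p q := by
        rw [mul_reflectingPath_apply, thMat_apply, thMat_apply, thKernel_comm v p,
          thKernel_comm v p, thKernel_orderSucc, thKernel_orderPred]

lemma exists_castSucc_add_succ_eq {G : Type*} [AddGroup G] (c : Fin n → G) :
    ∃ w : Fin (n + 1) → G, w (Fin.last n) = 0 ∧ ∀ p, w p.castSucc + w p.succ = c p := by
  induction n with
  | zero => exact ⟨0, rfl, fun p => p.elim0⟩
  | succ n ih =>
    obtain ⟨w, hw_last, hw⟩ := ih (Fin.tail c)
    refine ⟨Fin.cons (c 0 - w 0) w, hw_last, Fin.forall_fin_succ.mpr ⟨?_, hw⟩⟩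
    exact sub_add_cancel _ _

lemma exists_thMat_apply_zero_eq (c : Fin (n + 1) → ℝ) :
    ∃ v : Fin (n + 1) → ℝ, ∀ p, thMat v p 0 = c p := by
  obtain ⟨w, hw_last, hw⟩ := exists_castSucc_add_succ_eq c
  refine ⟨fun k => w k.castSucc, fun p => ?_⟩
  rw [← hw p, thMat_apply, thKernel]
  congr 1
  · exact evenExtend_of_natAbs_eq _ (by simp)
  · cases p using Fin.lastCases with
    | last => simpa [hw_last] using evenExtend_self fun k : Fin (n + 1) => w k.castSucc
    | cast p =>
      rw [← Fin.castSucc_succ]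
      exact evenExtend_of_natAbs_eq _
        (by simp only [Fin.val_castSucc, Fin.val_succ, Fin.val_zero]; omega)

lemma mem_range_thMat_iff {M : Matrix (Fin n) (Fin n) ℝ} :
    M ∈ Set.range thMat ↔ Commute (reflectingPath (Fin n) ℝ) M := by
  refine ⟨?_, fun hM => ?_⟩
  · rintro ⟨v, rfl⟩
    exact commute_reflectingPath_thMat v
  cases n with
  | zero => exact ⟨0, Subsingleton.elim _ _⟩
  | succ n =>
    obtain ⟨v, hv⟩ := exists_thMat_apply_zero_eq fun p => M p 0
    refine ⟨v, sub_eq_zero.mp (eq_zero_of_commute_reflectingPath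
      ((commute_reflectingPath_thMat v).sub_right hM) fun p q hq => ?_)⟩
    rw [isMin_iff_eq_bot.mp hq]
    exact sub_eq_zero.mpr (hv p)

end ThMat

section Blocks

variable {l m ι κ R : Type*} [NonAssocSemiring R]

lemma kronecker_one_mul_submatrix [Fintype l] [Fintype ι] [DecidableEq ι] (S : Matrix l l R)
    (X : Matrix (l × ι) (m × κ) R) (i : ι) (j : κ) :
    ((S ⊗ₖ (1 : Matrix ι ι R)) * X).submatrix (·, i) (·, j) = S * X.submatrix (·, i) (·, j) := by
  ext p q
  simp [mul_apply, Fintype.sum_prod_type, one_apply]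

lemma mul_kronecker_one_submatrix [Fintype m] [Fintype κ] [DecidableEq κ]
    (X : Matrix (l × ι) (m × κ) R) (T : Matrix m m R) (i : ι) (j : κ) :
    (X * (T ⊗ₖ (1 : Matrix κ κ R))).submatrix (·, i) (·, j) = X.submatrix (·, i) (·, j) * T := by
  ext p q
  simp [mul_apply, Fintype.sum_prod_type, one_apply]

lemma kronecker_one_mul_eq_mul_kronecker_one_iff [Fintype l] [Fintype m] [Fintype ι] [Fintype κ]
    [DecidableEq ι] [DecidableEq κ] {S : Matrix l l R} {T : Matrix m m R}
    {X : Matrix (l × ι) (m × κ) R} :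
    (S ⊗ₖ (1 : Matrix ι ι R)) * X = X * (T ⊗ₖ (1 : Matrix κ κ R)) ↔
      ∀ i j, S * X.submatrix (·, i) (·, j) = X.submatrix (·, i) (·, j) * T := by
  simp only [← kronecker_one_mul_submatrix, ← mul_kronecker_one_submatrix]
  exact ⟨fun h i j => by rw [h], fun h => Matrix.ext fun p q => congr_fun₂ (h p.2 q.2) p.1 q.1⟩

end Blocks

section Tmat

variable {n1 n2 n3 : ℕ}

lemma tmat_submatrix (A : Fin n3 → Matrix (Fin n1) (Fin n2) ℝ) (i : Fin n1) (j : Fin n2) :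
    (tmat A).submatrix (·, i) (·, j) = thMat fun k => A k i j := by
  ext p q
  simp only [tmat, thMat, hankelPart, submatrix_apply, of_apply, Matrix.add_apply]
  split_ifs <;> rfl

lemma mem_range_tmat_iff_forall_submatrix {X : Matrix (Fin n3 × Fin n1) (Fin n3 × Fin n2) ℝ} :
    X ∈ Set.range tmat ↔ ∀ i j, X.submatrix (·, i) (·, j) ∈ Set.range thMat := by
  refine ⟨?_, fun h => ?_⟩
  · rintro ⟨A, rfl⟩ i j
    exact ⟨_, (tmat_submatrix A i j).symm⟩
  · choose v hv using h
    let A : Fin n3 → Matrix (Fin n1) (Fin n2) ℝ := fun k => Matrix.of fun i j => v i j k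
    have hA (i j) : (tmat A).submatrix (·, i) (·, j) = X.submatrix (·, i) (·, j) :=
      (tmat_submatrix A i j).trans (hv i j)
    exact ⟨A, Matrix.ext fun p q => congr_fun₂ (hA p.2 q.2) p.1 q.1⟩

lemma mem_range_tmat_iff {X : Matrix (Fin n3 × Fin n1) (Fin n3 × Fin n2) ℝ} :
    X ∈ Set.range tmat ↔
      (reflectingPath (Fin n3) ℝ ⊗ₖ (1 : Matrix (Fin n1) (Fin n1) ℝ)) * X =
        X * (reflectingPath (Fin n3) ℝ ⊗ₖ (1 : Matrix (Fin n2) (Fin n2) ℝ)) := by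
  simp only [mem_range_tmat_iff_forall_submatrix, mem_range_thMat_iff, commute_iff_eq,
    kronecker_one_mul_eq_mul_kronecker_one_iff]

end Tmat

/-- a tensor `A ∈ ℝ^{n×n×n3}` is invertible with respect to the c-product if and
only if the matrix `mat(A)` is invertible. -/
theorem cProd_invertible_iff {n n3 : ℕ} (A : Fin n3 → Matrix (Fin n) (Fin n) ℝ) :
    (∃ B : Fin n3 → Matrix (Fin n) (Fin n) ℝ,
        tmat A * tmat B = 1 ∧ tmat B * tmat A = 1) ↔ IsUnit (tmat A) := by
  refine ⟨fun ⟨B, hAB, hBA⟩ => ⟨⟨tmat A, tmat B, hAB, hBA⟩, rfl⟩, fun ⟨u, hu⟩ => ?_⟩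
  have hu_commute : Commute (reflectingPath (Fin n3) ℝ ⊗ₖ (1 : Matrix (Fin n) (Fin n) ℝ)) u :=
    mem_range_tmat_iff.mp ⟨A, hu.symm⟩
  obtain ⟨B, hB⟩ := mem_range_tmat_iff.mpr hu_commute.units_inv_right.eq
  rw [← hu]
  exact ⟨B, hB ▸ u.mul_inv, hB ▸ u.inv_mul⟩

end
end

section
/- Eckart–Young theorem for the c-product (transform-domain form): let A ∈ ℝ^{n1×n2×n3}, let k ≤ min(n1,n2), and let A_k ∈ ℝ^{n1×n2×n3} be a tensor such that for every i, the transformed slice (Ã_k)^{(i)} minimizes ‖Ã^{(i)} − R‖_F over all n1×n2 real matrices R of rank at most k. Then for all X ∈ ℝ^{n1×k×n3} and Y ∈ ℝ^{k×n2×n3}, writing X ⋆_c Y for the tensor C with mat(C) = mat(X)·mat(Y), one has Σ_{i=1}^{n3} ‖Ã^{(i)} − ((X ⋆_c Y)~)^{(i)}‖_F² ≥ Σ_{i=1}^{n3} ‖Ã^{(i)} − (Ã_k)^{(i)}‖_F². -/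
open Matrix BigOperators Kronecker

noncomputable section

/-!
For a unit vector `v = e_q` with `q > 0`, column `s` of the Toeplitz-plus-Hankel matrix `thMat v` is
the sum of two unit vectors, at the positions obtained from `s - q` and `s + q` by folding them back
into `{0, …, n - 1}` through reflection in `-1/2` or `n - 1/2`. The rows of the DCT matrix are
cosines invariant under both reflections, so the product-to-sum formula makes them left eigenvectors
of every `thMat v`. The first column of `thMat v` is `(1 + upshift n) *ᵥ v`, which identifies the
eigenvalues as the entries of `transformM n *ᵥ v`. Hence the DCT turns `tmat C = tmat X * tmat Y`
into products of transformed slices with inner dimension `k`, so each transformed slice of `C`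
competes in the minimisation that the corresponding slice of `Ak` solves.
-/

/-- The unnormalised DCT wave of frequency `p`, extended from sample points `r < n` to all integers.
Its reflection symmetries across `-1/2` and `n - 1/2` are the boundary conditions encoded by
`thMat`. -/
def dctWave (n p : ℕ) (r : ℤ) : ℝ :=
  Real.cos (p * (2 * r + 1) * Real.pi / (2 * n))

section DctWave

variable {n p : ℕ}

theorem dctWave_neg_one_sub (r : ℤ) : dctWave n p (-1 - r) = dctWave n p r := by
  rw [dctWave, dctWave, ← Real.cos_neg]
  congr 1
  push_cast
  ring

theorem dctWave_two_mul_sub_one_sub (hn : n ≠ 0) (r : ℤ) :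
    dctWave n p (2 * n - 1 - r) = dctWave n p r := by
  rw [dctWave, dctWave, ← Real.cos_nat_mul_two_pi_sub _ p]
  congr 1
  push_cast
  field_simp
  ring

theorem dctWave_sub_add_dctWave_add (s q : ℤ) :
    dctWave n p (s - q) + dctWave n p (s + q) =
      2 * dctWave n p s * Real.cos (p * (2 * q) * Real.pi / (2 * n)) := by
  rw [dctWave, dctWave, dctWave, Real.two_mul_cos_mul_cos]
  congr 2 <;> push_cast <;> ring

theorem dctWave_zero_pos (hp : p < n) : 0 < dctWave n p 0 := by
  have hn : (0 : ℝ) < n := by exact_mod_cast p.zero_le.trans_lt hp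
  have hpn : (p : ℝ) < n := by exact_mod_cast hp
  have hangle : p * (2 * ((0 : ℤ) : ℝ) + 1) * Real.pi / (2 * n) = p / n * (Real.pi / 2) := by
    push_cast
    ring
  rw [dctWave, hangle]
  refine Real.cos_pos_of_mem_Ioo ⟨?_, ?_⟩
  · exact (neg_lt_zero.mpr Real.pi_div_two_pos).trans_le (by positivity)
  · exact mul_lt_of_lt_one_left Real.pi_div_two_pos ((div_lt_one hn).mpr hpn)

end DctWave

section Dct

variable {n : ℕ}

theorem dctMatrix_eq_mul_dctWave (p r : Fin n) :
    dctMatrix n p r = √((2 - if (p : ℕ) = 0 then 1 else 0) / n) * dctWave n p r := by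
  simp [dctMatrix, dctWave]

theorem dctMatrix_zero_col_pos (p : Fin n) : 0 < dctMatrix n p ⟨0, p.pos⟩ := by
  have hn : (0 : ℝ) < n := by exact_mod_cast p.pos
  rw [dctMatrix_eq_mul_dctWave]
  refine mul_pos (Real.sqrt_pos.mpr (div_pos ?_ hn)) (dctWave_zero_pos p.isLt)
  split_ifs <;> norm_num

theorem Wdiag_mul_transformM :
    Wdiag n * transformM n = dctMatrix n * (1 + upshift n) := by
  have hW : IsUnit (Wdiag n) :=
    isUnit_diagonal.mpr <| Pi.isUnit_iff.mpr fun p => (dctMatrix_zero_col_pos p).ne'.isUnit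
  rw [transformM, Matrix.mul_assoc,
    mul_nonsing_inv_cancel_left _ _ ((isUnit_iff_isUnit_det _).mp hW)]

theorem upshift_mulVec_apply (v : Fin n → ℝ) (r : Fin n) :
    (upshift n *ᵥ v) r = if h : (r : ℕ) + 1 < n then v ⟨r + 1, h⟩ else 0 := by
  simp only [upshift, mulVec, dotProduct, of_apply, ite_mul, one_mul, zero_mul]
  split_ifs with h
  · rw [Fintype.sum_eq_single ⟨r + 1, h⟩ fun q hq => if_neg fun hrq => hq (Fin.ext hrq.symm),
      if_pos rfl]
  · exact Finset.sum_eq_zero fun q _ => if_neg (by omega)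

theorem thMat_eq_sum_smul_single (v : Fin n → ℝ) :
    thMat v = ∑ q, v q • thMat (Pi.single q 1) := by
  ext r s
  simp only [Matrix.sum_apply, Matrix.smul_apply, smul_eq_mul, thMat, of_apply,
    mul_add, Finset.sum_add_distrib]
  congr 1
  · simp [Pi.single_apply]
  · split_ifs <;> simp [Pi.single_apply]

theorem thMat_single_zero {q : Fin n} (hq : (q : ℕ) = 0) :
    thMat (Pi.single q 1) = 1 := by
  ext r s
  simp only [thMat, of_apply, Pi.single_apply, one_apply, Fin.ext_iff, Nat.dist]
  split_ifs <;> first | omega | norm_num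

theorem thMat_single_of_ne_zero {q : Fin n} (hq : (q : ℕ) ≠ 0) (r s : Fin n) :
    thMat (Pi.single q 1) r s =
      (if (r : ℤ) = s - q ∨ (r : ℤ) = -1 - (s - q) then 1 else 0) +
        if (r : ℤ) = s + q ∨ (r : ℤ) = 2 * n - 1 - (s + q) then 1 else 0 := by
  simp only [thMat, of_apply, Pi.single_apply, Fin.ext_iff, Nat.dist]
  split_ifs <;> first | omega | norm_num

theorem sum_mul_ite_eq_or_eq_sub {R : Type*} [NonAssocSemiring R] {f : ℤ → R} {c m : ℤ}
    (hf : f (c - m) = f m)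
    (hm : Xor (m ∈ Set.Ico 0 (n : ℤ)) (c - m ∈ Set.Ico 0 (n : ℤ))) :
    ∑ r : Fin n, f r * (if (r : ℤ) = m ∨ (r : ℤ) = c - m then 1 else 0) = f m := by
  simp only [Set.mem_Ico] at hm
  obtain ⟨r₀, hr₀, hunique⟩ : ∃ r₀ : Fin n, ((r₀ : ℤ) = m ∨ (r₀ : ℤ) = c - m) ∧
      ∀ r : Fin n, (r : ℤ) = m ∨ (r : ℤ) = c - m → r = r₀ := by
    rcases hm with ⟨hin, hout⟩ | ⟨hin, hout⟩
    · exact ⟨⟨m.toNat, by omega⟩, by simp only; omega,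
        fun r hr => Fin.ext (by simp only; omega)⟩
    · exact ⟨⟨(c - m).toNat, by omega⟩, by simp only; omega,
        fun r hr => Fin.ext (by simp only; omega)⟩
  rw [Fintype.sum_eq_single r₀ fun r hr => by rw [if_neg (mt (hunique r) hr), mul_zero],
    if_pos hr₀, mul_one]
  rcases hr₀ with h | h
  · rw [h]
  · rw [h, hf]

theorem sum_mul_thMat_single_of_ne_zero {f : ℤ → ℝ} (hleft : ∀ r, f (-1 - r) = f r)
    (hright : ∀ r, f (2 * n - 1 - r) = f r) {q : Fin n} (hq : (q : ℕ) ≠ 0) (s : Fin n) :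
    ∑ r : Fin n, f r * thMat (Pi.single q 1) r s = f (s - q) + f (s + q) := by
  have hqn := q.isLt
  have hsn := s.isLt
  simp only [thMat_single_of_ne_zero hq, mul_add, Finset.sum_add_distrib]
  congr 1
  · exact sum_mul_ite_eq_or_eq_sub (hleft _) (by simp only [Set.mem_Ico, Xor]; omega)
  · exact sum_mul_ite_eq_or_eq_sub (hright _) (by simp only [Set.mem_Ico, Xor]; omega)

theorem exists_dctMatrix_mul_thMat_single (q : Fin n) :
    ∃ d : Fin n → ℝ, dctMatrix n * thMat (Pi.single q 1) = diagonal d * dctMatrix n := by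
  by_cases hq : (q : ℕ) = 0
  · exact ⟨1, by rw [thMat_single_zero hq, mul_one, diagonal_one', one_mul]⟩
  · refine ⟨fun p => 2 * Real.cos (p * (2 * q) * Real.pi / (2 * n)), ?_⟩
    ext p s
    have hwave := sum_mul_thMat_single_of_ne_zero (f := dctWave n p) dctWave_neg_one_sub
      (dctWave_two_mul_sub_one_sub p.pos.ne') hq s
    rw [dctWave_sub_add_dctWave_add, Int.cast_natCast] at hwave
    rw [mul_apply, diagonal_mul]
    simp only [dctMatrix_eq_mul_dctWave, mul_assoc, ← Finset.mul_sum, hwave]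
    ring

theorem exists_dctMatrix_mul_thMat (v : Fin n → ℝ) :
    ∃ d : Fin n → ℝ, dctMatrix n * thMat v = diagonal d * dctMatrix n := by
  choose d hd using exists_dctMatrix_mul_thMat_single (n := n)
  refine ⟨∑ q, v q • d q, ?_⟩
  rw [thMat_eq_sum_smul_single v]
  simp only [Matrix.mul_sum, Matrix.mul_smul, hd]
  ext
  simp [Matrix.sum_apply, Finset.sum_mul, mul_assoc]

theorem thMat_zero_col (v : Fin n → ℝ) (r : Fin n) :
    thMat v r ⟨0, r.pos⟩ = ((1 + upshift n) *ᵥ v) r := by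
  simp only [thMat, of_apply, add_mulVec, one_mulVec, Pi.add_apply, upshift_mulVec_apply,
    Nat.dist_zero_right, add_zero]
  congr 1
  split_ifs <;> first | rfl | omega

theorem dctMatrix_mul_thMat (v : Fin n → ℝ) :
    dctMatrix n * thMat v = diagonal (transformM n *ᵥ v) * dctMatrix n := by
  obtain ⟨d, hd⟩ := exists_dctMatrix_mul_thMat v
  suffices d = transformM n *ᵥ v by rw [hd, this]
  ext p
  refine mul_right_cancel₀ (dctMatrix_zero_col_pos p).ne' ?_
  calc d p * dctMatrix n p ⟨0, p.pos⟩
      = (dctMatrix n * thMat v) p ⟨0, p.pos⟩ := by rw [hd, diagonal_mul]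
    _ = ((dctMatrix n * (1 + upshift n)) *ᵥ v) p := by
      rw [← mulVec_mulVec, mul_apply]
      exact Finset.sum_congr rfl fun r _ => congrArg _ (thMat_zero_col v r)
    _ = (transformM n *ᵥ v) p * dctMatrix n p ⟨0, p.pos⟩ := by
      rw [← Wdiag_mul_transformM, ← mulVec_mulVec, Wdiag, mulVec_diagonal, mul_comm]

end Dct

section Tensor

variable {n1 n2 n3 k : ℕ}

theorem tmat_apply_eq_thMat (A : Fin n3 → Matrix (Fin n1) (Fin n2) ℝ) (r s : Fin n3)
    (i : Fin n1) (j : Fin n2) : tmat A (r, i) (s, j) = thMat (fun q => A q i j) r s := by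
  simp only [tmat, thMat, hankelPart, of_apply, Matrix.add_apply]
  split_ifs <;> rfl

theorem tSlice_apply (A : Fin n3 → Matrix (Fin n1) (Fin n2) ℝ) (p : Fin n3)
    (i : Fin n1) (j : Fin n2) :
    tSlice A p i j = (transformM n3 *ᵥ fun q => A q i j) p := by
  simp [tSlice, Matrix.sum_apply, mulVec, dotProduct]

theorem replicateRow_dctMatrix_kronecker_one_mul_tmat (A : Fin n3 → Matrix (Fin n1) (Fin n2) ℝ)
    (p : Fin n3) :
    (replicateRow Unit (dctMatrix n3 p) ⊗ₖ (1 : Matrix (Fin n1) (Fin n1) ℝ)) * tmat A =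
      replicateRow Unit (dctMatrix n3 p) ⊗ₖ tSlice A p := by
  ext ⟨u, i⟩ ⟨s, j⟩
  have hth := congr_fun₂ (dctMatrix_mul_thMat fun q => A q i j) p s
  rw [mul_apply, diagonal_mul, ← tSlice_apply] at hth
  simp [mul_apply, Fintype.sum_prod_type, one_apply, tmat_apply_eq_thMat, hth, mul_comm]

theorem tSlice_eq_mul_of_tmat_eq_mul {X : Fin n3 → Matrix (Fin n1) (Fin k) ℝ}
    {Y : Fin n3 → Matrix (Fin k) (Fin n2) ℝ} {C : Fin n3 → Matrix (Fin n1) (Fin n2) ℝ}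
    (h : tmat C = tmat X * tmat Y) (p : Fin n3) : tSlice C p = tSlice X p * tSlice Y p := by
  let L : Matrix Unit (Fin n3) ℝ := replicateRow Unit (dctMatrix n3 p)
  have hkron : L ⊗ₖ tSlice C p = L ⊗ₖ (tSlice X p * tSlice Y p) := by
    calc
      L ⊗ₖ tSlice C p = L ⊗ₖ (1 : Matrix (Fin n1) (Fin n1) ℝ) * tmat X * tmat Y := by
          rw [Matrix.mul_assoc, ← h, replicateRow_dctMatrix_kronecker_one_mul_tmat]
      _ = ((1 : Matrix Unit Unit ℝ) * L) ⊗ₖ (tSlice X p * (1 : Matrix (Fin k) (Fin k) ℝ)) *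
          tmat Y := by
          rw [replicateRow_dctMatrix_kronecker_one_mul_tmat, Matrix.one_mul, Matrix.mul_one]
      _ = (1 : Matrix Unit Unit ℝ) ⊗ₖ tSlice X p * L ⊗ₖ tSlice Y p := by
          rw [mul_kronecker_mul, Matrix.mul_assoc, replicateRow_dctMatrix_kronecker_one_mul_tmat]
      _ = L ⊗ₖ (tSlice X p * tSlice Y p) := by rw [← mul_kronecker_mul, Matrix.one_mul]
  ext i j
  exact mul_left_cancel₀ (dctMatrix_zero_col_pos p).ne'
    (congr_fun₂ hkron ((), i) (⟨0, p.pos⟩, j))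

theorem rank_tSlice_le_of_tmat_eq_mul {X : Fin n3 → Matrix (Fin n1) (Fin k) ℝ}
    {Y : Fin n3 → Matrix (Fin k) (Fin n2) ℝ} {C : Fin n3 → Matrix (Fin n1) (Fin n2) ℝ}
    (h : tmat C = tmat X * tmat Y) (p : Fin n3) : (tSlice C p).rank ≤ k := by
  rw [tSlice_eq_mul_of_tmat_eq_mul h]
  exact (rank_mul_le_left _ _).trans (rank_le_width _)

end Tensor

/-- Eckart–Young for the c-product, transform-domain form: if each transformed
slice of `A_k` minimizes `‖Ã^{(i)} − R‖_F` over the rank-`≤ k` matrices `R`, then for every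
c-product `X ⋆_c Y` with inner dimension `k` (i.e. every `C` with `mat(C) = mat(X)·mat(Y)`),
`Σ_i ‖Ã^{(i)} − C̃^{(i)}‖_F² ≥ Σ_i ‖Ã^{(i)} − (Ã_k)^{(i)}‖_F²`. -/
theorem c_eckart_young {n1 n2 n3 k : ℕ} (hk : k ≤ min n1 n2)
    (A Ak : Fin n3 → Matrix (Fin n1) (Fin n2) ℝ)
    (hAk : ∀ i, (tSlice Ak i).rank ≤ k ∧
      ∀ R : Matrix (Fin n1) (Fin n2) ℝ, R.rank ≤ k →
        frobNorm (tSlice A i - tSlice Ak i) ≤ frobNorm (tSlice A i - R)) :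
    ∀ (X : Fin n3 → Matrix (Fin n1) (Fin k) ℝ) (Y : Fin n3 → Matrix (Fin k) (Fin n2) ℝ)
      (C : Fin n3 → Matrix (Fin n1) (Fin n2) ℝ), tmat C = tmat X * tmat Y →
      ∑ i, frobNorm (tSlice A i - tSlice Ak i) ^ 2 ≤
        ∑ i, frobNorm (tSlice A i - tSlice C i) ^ 2 := by
  intro X Y C hC
  gcongr with i
  · exact Real.sqrt_nonneg _
  · exact (hAk i).2 _ (rank_tSlice_le_of_tmat_eq_mul hC i)

end
end
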